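/- Let n ≥ 2, let e be an (n−2)-cell of the n-dimensional cubical grid, and let V be a nonempty set of voxels each of which is bounded by e (so V ⊆ B_{n−2}(e)). Then exactly one of the following five cases occurs: (i) V is a singleton; (ii) V = B_{n−1}(f) for some (n−1)-cell f with e < f (two strictly (n−1)-adjacent voxels); (iii) V = {v1, v2} for two distinct voxels with v1 ∩ v2 = e (two strictly (n−2)-adjacent voxels, an (n−2)-gap configuration with hub e); (iv) V is an L-block centered on e (three voxels); (v) V = B_{n−2}(e) (all four voxels). -/

import Mathlib

/-!
An `(n-2)`-cell `e` has exactly two even coordinates `a ≠ b`, and a voxel bounded by `e` is obtained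
by moving each of `e a`, `e b` by `±1`. So `corner e a b : Bool × Bool → (Fin n → ℤ)` is an injective
parametrization of `Block e` (`corner_injective`, `mem_block_iff_corner`), and `V` is the image of a
finite set `S` of sign pairs. Under this parametrization the `(n-1)`-blocks over `e` are the sides
of the square `Bool × Bool` (`exists_face_iff`) and the gap configurations are its two diagonals
(`interCell_corner_iff`). It remains to classify the nonempty subsets of a four-point square
(`square_classification`), a finite check.
-/

namespace DigitalGeometry

/-- The dimension of a cell of the cubical grid (doubled coordinates):
the number of odd coordinates. -/
def cdim {n : ℕ} (c : Fin n → ℤ) : ℕ :=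
  (Finset.univ.filter fun j => Odd (c j)).card

/-- The bounding relation `e < f` between cells of the grid. -/
def Bounds {n : ℕ} (e f : Fin n → ℤ) : Prop :=
  cdim e < cdim f ∧ ∀ j, e j = f j ∨ (Odd (f j) ∧ |e j - f j| = 1)

/-- A voxel is an `n`-cell: all coordinates odd. -/
def IsVoxel {n : ℕ} (v : Fin n → ℤ) : Prop := ∀ j, Odd (v j)

/-- The `i`-block centered on an `i`-cell `e`: all voxels bounded by `e`. -/
def Block {n : ℕ} (e : Fin n → ℤ) : Set (Fin n → ℤ) :=
  {v | IsVoxel v ∧ Bounds e v}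

/-- `Cells D i` : the `i`-cells of the object `D` (for `i < n` those bounding
some voxel of `D`; for `i = n` it is `D` itself). -/
def Cells {n : ℕ} (D : Set (Fin n → ℤ)) (i : ℕ) : Set (Fin n → ℤ) :=
  {e | cdim e = i ∧ (e ∈ D ∨ ∃ v ∈ D, Bounds e v)}

/-- `c_i(D)` : the number of `i`-cells of `D`. -/
noncomputable def cCount {n : ℕ} (D : Set (Fin n → ℤ)) (i : ℕ) : ℕ := (Cells D i).ncard

/-- The free `i`-cells of `D`: those whose `i`-block is not contained in `D`. -/
def FreeCells {n : ℕ} (D : Set (Fin n → ℤ)) (i : ℕ) : Set (Fin n → ℤ) :=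
  {e | e ∈ Cells D i ∧ ¬ Block e ⊆ D}

/-- `c*_i(D)` : the number of free `i`-cells of `D`. -/
noncomputable def cStar {n : ℕ} (D : Set (Fin n → ℤ)) (i : ℕ) : ℕ := (FreeCells D i).ncard

/-- The non-free `i`-cells of `D`. -/
def NonFreeCells {n : ℕ} (D : Set (Fin n → ℤ)) (i : ℕ) : Set (Fin n → ℤ) :=
  {e | e ∈ Cells D i ∧ Block e ⊆ D}

/-- `c'_i(D)` : the number of non-free `i`-cells of `D`. -/
noncomputable def cPrime {n : ℕ} (D : Set (Fin n → ℤ)) (i : ℕ) : ℕ := (NonFreeCells D i).ncard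

/-- `InterCell v1 v2 e` : the intersection of the voxels `v1`, `v2`
(as subsets of `ℝ^n`) equals the cell `e`. -/
def InterCell {n : ℕ} (v1 v2 e : Fin n → ℤ) : Prop :=
  ∀ j, (v1 j = v2 j ∧ e j = v1 j) ∨
       (e j + 1 = max (v1 j) (v2 j) ∧ e j - 1 = min (v1 j) (v2 j))

/-- `e` is an `(n-2)`-hub of `D`, i.e. `D` has an `(n-2)`-gap over `e`. -/
def IsHub {n : ℕ} (D : Set (Fin n → ℤ)) (e : Fin n → ℤ) : Prop :=
  cdim e = n - 2 ∧ ∃ v1 v2 : Fin n → ℤ, v1 ≠ v2 ∧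
    Block e ∩ D = {v1, v2} ∧ InterCell v1 v2 e

/-- `g_{n-2}(D)` : the number of `(n-2)`-gaps of `D`. -/
noncomputable def gapCount {n : ℕ} (D : Set (Fin n → ℤ)) : ℕ := {e | IsHub D e}.ncard

/-- `b_j(e, D)` : the number of free `j`-cells of `D` bounded by `e`. -/
noncomputable def bcount {n : ℕ} (e : Fin n → ℤ) (D : Set (Fin n → ℤ)) (j : ℕ) : ℕ :=
  {f | f ∈ FreeCells D j ∧ Bounds e f}.ncard

/-- Two voxels are `i`-adjacent if they are distinct and their intersection
contains an `i`-cell. -/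
def Adj {n : ℕ} (i : ℕ) (v1 v2 : Fin n → ℤ) : Prop :=
  v1 ≠ v2 ∧ ∃ e : Fin n → ℤ, cdim e = i ∧ Bounds e v1 ∧ Bounds e v2

/-! ### Dimension and blocks in coordinates -/

theorem cdim_add_card_even {n : ℕ} (c : Fin n → ℤ) :
    cdim c + (Finset.univ.filter fun j => Even (c j)).card = n := by
  have h := Finset.card_filter_add_card_filter_not (s := (Finset.univ : Finset (Fin n)))
    (fun j => Odd (c j))
  simpa [cdim] using h

theorem IsVoxel.cdim_eq {n : ℕ} {v : Fin n → ℤ} (hv : IsVoxel v) : cdim v = n := by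
  have : (Finset.univ.filter fun j => Odd (v j)) = Finset.univ :=
    Finset.filter_true_of_mem fun j _ => hv j
  simp [cdim, this]

/-- Coordinatewise description of a block: odd coordinates of the center are kept and even ones
move by `±1`. -/
theorem mem_block_iff {n : ℕ} {f v : Fin n → ℤ} (hf : cdim f < n) :
    v ∈ Block f ↔ ∀ j, (Odd (f j) ∧ v j = f j) ∨
      (Even (f j) ∧ (v j = f j + 1 ∨ v j = f j - 1)) := by
  constructor
  · rintro ⟨hv, -, hb⟩ j
    have hvj := hv j
    rcases hb j with h | ⟨-, h⟩
    · left
      rw [h]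
      exact ⟨hvj, rfl⟩
    · right
      rcases eq_or_eq_neg_of_abs_eq h with h | h <;> grind
  · intro h
    have hv : IsVoxel v := by
      intro j
      have := h j
      grind
    refine ⟨hv, by rw [hv.cdim_eq]; exact hf, fun j => ?_⟩
    rcases h j with ⟨-, h⟩ | ⟨-, h | h⟩
    · exact Or.inl h.symm
    · exact Or.inr ⟨hv j, by rw [h]; simp⟩
    · exact Or.inr ⟨hv j, by rw [h]; simp⟩

/-! ### The four corners around an `(n-2)`-cell -/

/-- The integer sign of a Boolean: `true` is `+1` and `false` is `-1`. -/
def sgn (s : Bool) : ℤ := if s then 1 else -1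

theorem exists_sgn {x y : ℤ} : (∃ s, x = y + sgn s) ↔ (x = y + 1 ∨ x = y - 1) := by
  simp [sgn, sub_eq_add_neg, or_comm]

/-- The voxel obtained from `e` by moving the coordinates `a` and `b` by the two signs in `p`. -/
def corner {n : ℕ} (e : Fin n → ℤ) (a b : Fin n) (p : Bool × Bool) : Fin n → ℤ := fun j =>
  if j = a then e a + sgn p.1 else if j = b then e b + sgn p.2 else e j

theorem corner_left {n : ℕ} (e : Fin n → ℤ) (a b : Fin n) (p : Bool × Bool) :
    corner e a b p a = e a + sgn p.1 := by simp [corner]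

theorem corner_right {n : ℕ} (e : Fin n → ℤ) {a b : Fin n} (hab : a ≠ b) (p : Bool × Bool) :
    corner e a b p b = e b + sgn p.2 := by simp [corner, hab.symm]

theorem corner_other {n : ℕ} (e : Fin n → ℤ) {a b j : Fin n} (ha : j ≠ a) (hb : j ≠ b)
    (p : Bool × Bool) : corner e a b p j = e j := by simp [corner, ha, hb]

theorem corner_swap {n : ℕ} (e : Fin n → ℤ) {a b : Fin n} (hab : a ≠ b) (p : Bool × Bool) :
    corner e b a p.swap = corner e a b p := by
  funext j
  simp only [corner, Prod.fst_swap, Prod.snd_swap]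
  grind

theorem sgn_injective : Function.Injective sgn := by
  intro s t
  cases s <;> cases t <;> simp [sgn]

theorem corner_injective {n : ℕ} (e : Fin n → ℤ) {a b : Fin n} (hab : a ≠ b) :
    Function.Injective (corner e a b) := by
  intro p q h
  have h1 := congrFun h a
  have h2 := congrFun h b
  rw [corner_left, corner_left] at h1
  rw [corner_right e hab, corner_right e hab] at h2
  exact Prod.ext (sgn_injective (add_left_cancel h1)) (sgn_injective (add_left_cancel h2))

theorem eq_corner_iff {n : ℕ} {e v : Fin n → ℤ} {a b : Fin n} (hab : a ≠ b) (p : Bool × Bool) :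
    v = corner e a b p ↔ v a = e a + sgn p.1 ∧ v b = e b + sgn p.2 ∧
      ∀ j, j ≠ a → j ≠ b → v j = e j := by
  constructor
  · rintro rfl
    exact ⟨corner_left .., corner_right e hab p, fun j ha hb => corner_other e ha hb p⟩
  · rintro ⟨h1, h2, h3⟩
    funext j
    simp only [corner]
    split_ifs with ha hb
    · rw [ha, h1]
    · rw [hb, h2]
    · exact h3 j ha hb

/-- The even coordinates of `e` are exactly `a` and `b`, and `a ≠ b`. -/
structure EvenPair {n : ℕ} (e : Fin n → ℤ) (a b : Fin n) : Prop where
  ne : a ≠ b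
  even_iff : ∀ j, Even (e j) ↔ j = a ∨ j = b

theorem EvenPair.symm {n : ℕ} {e : Fin n → ℤ} {a b : Fin n} (h : EvenPair e a b) :
    EvenPair e b a :=
  ⟨h.ne.symm, fun j => (h.even_iff j).trans or_comm⟩

theorem exists_evenPair {n : ℕ} (hn : 2 ≤ n) {e : Fin n → ℤ} (he : cdim e = n - 2) :
    ∃ a b, EvenPair e a b := by
  have h := cdim_add_card_even e
  obtain ⟨a, b, hab, hs⟩ := Finset.card_eq_two.1
    (show (Finset.univ.filter fun j => Even (e j)).card = 2 by omega)
  refine ⟨a, b, hab, fun j => ?_⟩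
  simpa using Finset.ext_iff.1 hs j

theorem mem_block_iff_corner {n : ℕ} (hn : 2 ≤ n) {e v : Fin n → ℤ} {a b : Fin n}
    (he : cdim e = n - 2) (h : EvenPair e a b) :
    v ∈ Block e ↔ ∃ p, v = corner e a b p := by
  rw [mem_block_iff (by omega)]
  simp only [eq_corner_iff h.ne, Prod.exists]
  constructor
  · intro H
    have key : ∀ j, Even (e j) → ∃ s, v j = e j + sgn s := by
      intro j hj
      rw [exists_sgn]
      have := H j
      grind
    obtain ⟨s, hs⟩ := key a ((h.even_iff a).2 (Or.inl rfl))
    obtain ⟨t, ht⟩ := key b ((h.even_iff b).2 (Or.inr rfl))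
    refine ⟨s, t, hs, ht, fun j ha hb => ?_⟩
    have := H j
    have := h.even_iff j
    grind
  · rintro ⟨s, t, h1, h2, h3⟩ j
    have h1 := exists_sgn.1 ⟨s, h1⟩
    have h2 := exists_sgn.1 ⟨t, h2⟩
    have := h.even_iff j
    have := h3 j
    grind

/-! ### The `(n-1)`-cells over an `(n-2)`-cell -/

/-- The `(n-1)`-cell over `e` obtained by moving the coordinate `a` by the sign `s`. -/
def face {n : ℕ} (e : Fin n → ℤ) (a : Fin n) (s : Bool) : Fin n → ℤ :=
  Function.update e a (e a + sgn s)

theorem odd_sgn (s : Bool) : Odd (sgn s) := by cases s <;> simp [sgn]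

theorem even_face_iff {n : ℕ} {e : Fin n → ℤ} {a b : Fin n} (h : EvenPair e a b) (s : Bool)
    (j : Fin n) : Even (face e a s j) ↔ j = b := by
  rcases eq_or_ne j a with rfl | hj
  · have h1 : Odd (face e j s j) := by
      simpa [face] using ((h.even_iff j).2 (Or.inl rfl)).add_odd (odd_sgn s)
    simp [h.ne, h1]
  · simp [face, hj, h.even_iff]

theorem cdim_face {n : ℕ} {e : Fin n → ℤ} {a b : Fin n} (h : EvenPair e a b) (s : Bool) :
    cdim (face e a s) = n - 1 := by
  have h1 := cdim_add_card_even (face e a s)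
  simp only [even_face_iff h, Finset.filter_eq', Finset.mem_univ, if_true,
    Finset.card_singleton] at h1
  omega

theorem bounds_face {n : ℕ} (hn : 2 ≤ n) {e : Fin n → ℤ} {a b : Fin n} (he : cdim e = n - 2)
    (h : EvenPair e a b) (s : Bool) : Bounds e (face e a s) := by
  refine ⟨by rw [he, cdim_face h]; omega, fun j => ?_⟩
  rcases eq_or_ne j a with rfl | hj
  · right
    refine ⟨?_, ?_⟩
    · rw [← Int.not_even_iff_odd, even_face_iff h]
      exact h.ne
    · cases s <;> simp [face, sgn]
  · left
    simp [face, hj]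

theorem block_face {n : ℕ} (hn : 2 ≤ n) {e : Fin n → ℤ} {a b : Fin n}
    (h : EvenPair e a b) (s : Bool) :
    Block (face e a s) = {corner e a b (s, true), corner e a b (s, false)} := by
  ext v
  rw [mem_block_iff (by rw [cdim_face h]; omega)]
  simp only [← Int.not_even_iff_odd, even_face_iff h, Set.mem_insert_iff, Set.mem_singleton_iff,
    eq_corner_iff h.ne]
  have hfa : face e a s a = e a + sgn s := by simp [face]
  have hfj : ∀ j, j ≠ a → face e a s j = e j := fun j hj => by simp [face, hj]
  have hab := h.ne
  have ht : sgn true = 1 := rfl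
  have hf : sgn false = -1 := rfl
  rw [ht, hf]
  constructor
  · intro H
    have h1 := H a
    have h2 := H b
    have h3 : ∀ j, j ≠ a → j ≠ b → v j = e j := by
      intro j hja hjb
      have := H j
      have := hfj j hja
      grind
    have := hfj b hab.symm
    grind
  · intro H j
    have := hfj j
    grind

/-- An `(n-1)`-cell over `e` has one even coordinate, which is also an even coordinate of `e`; it
is therefore a `face` in the direction of the other even coordinate of `e`. -/
theorem exists_eq_face {n : ℕ} (hn : 2 ≤ n) {e f : Fin n → ℤ} {a b : Fin n}
    (h : EvenPair e a b) (hf : cdim f = n - 1) (hb : Bounds e f) :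
    ∃ s, f = face e a s ∨ f = face e b s := by
  have h1 := cdim_add_card_even f
  obtain ⟨c, hs⟩ := Finset.card_eq_one.1
    (show (Finset.univ.filter fun j => Even (f j)).card = 1 by omega)
  have hc : ∀ j, Even (f j) ↔ j = c := fun j => by simpa using Finset.ext_iff.1 hs j
  have main : ∀ x y, EvenPair e x y → c = y → ∃ s, f = face e x s := by
    intro x y hxy hcy
    have hx : Even (e x) := (hxy.even_iff x).2 (Or.inl rfl)
    have hfx : ¬ Even (f x) := by
      rw [hc, hcy]
      exact hxy.ne
    obtain ⟨s, hs⟩ : ∃ s, f x = e x + sgn s := by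
      rw [exists_sgn]
      rcases hb.2 x with h | ⟨-, h⟩
      · rw [h] at hx
        exact absurd hx hfx
      · rcases eq_or_eq_neg_of_abs_eq h with h | h <;> grind
    refine ⟨s, funext fun j => ?_⟩
    rcases eq_or_ne j x with rfl | hj
    · simp [face, hs]
    · have h2 := hxy.even_iff j
      have h3 := hc j
      simp only [face, Function.update_of_ne hj]
      rcases hb.2 j with h | ⟨h4, h⟩
      · exact h.symm
      · rcases eq_or_eq_neg_of_abs_eq h with h | h <;> grind
  have hcab : c = a ∨ c = b := by
    rw [← h.even_iff]
    have h2 := (hc c).2 rfl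
    rcases hb.2 c with h | ⟨h3, -⟩
    · rwa [h]
    · exact absurd h2 (Int.not_even_iff_odd.2 h3)
  rcases hcab with hca | hcb
  · obtain ⟨s, hs⟩ := main b a h.symm hca
    exact ⟨s, Or.inr hs⟩
  · obtain ⟨s, hs⟩ := main a b h hcb
    exact ⟨s, Or.inl hs⟩

/-- The `(n-1)`-blocks over `e` are the sides of the square of corners. -/
theorem exists_face_iff {n : ℕ} (hn : 2 ≤ n) {e : Fin n → ℤ} {a b : Fin n} (he : cdim e = n - 2)
    (h : EvenPair e a b) (V : Set (Fin n → ℤ)) :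
    (∃ f, cdim f = n - 1 ∧ Bounds e f ∧ V = Block f) ↔
      ∃ s, V = {corner e a b (s, true), corner e a b (s, false)} ∨
        V = {corner e a b (true, s), corner e a b (false, s)} := by
  have hb : ∀ s, Block (face e b s) = {corner e a b (true, s), corner e a b (false, s)} := by
    intro s
    rw [block_face hn h.symm, ← corner_swap e h.ne (true, s), ← corner_swap e h.ne (false, s)]
    rfl
  constructor
  · rintro ⟨f, hf, hef, rfl⟩
    obtain ⟨s, rfl | rfl⟩ := exists_eq_face hn h hf hef
    · exact ⟨s, Or.inl (block_face hn h s)⟩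
    · exact ⟨s, Or.inr (hb s)⟩
  · rintro ⟨s, rfl | rfl⟩
    · exact ⟨_, cdim_face h s, bounds_face hn he h s, (block_face hn h s).symm⟩
    · exact ⟨_, cdim_face h.symm s, bounds_face hn he h.symm s, (hb s).symm⟩

/-! ### Opposite corners -/

/-- Two corners meet exactly in `e` when they are opposite. -/
theorem interCell_corner_iff {n : ℕ} {e : Fin n → ℤ} {a b : Fin n} (hab : a ≠ b)
    (p q : Bool × Bool) :
    InterCell (corner e a b p) (corner e a b q) e ↔ q = (!p.1, !p.2) := by
  have key : ∀ (x : ℤ) (s t : Bool), ((x + sgn s = x + sgn t ∧ x = x + sgn s) ∨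
      (x + 1 = max (x + sgn s) (x + sgn t) ∧ x - 1 = min (x + sgn s) (x + sgn t))) ↔
      t = !s := by
    intro x s t
    cases s <;> cases t <;> simp [sgn] <;> omega
  constructor
  · intro H
    have h1 := H a
    have h2 := H b
    rw [corner_left, corner_left, key] at h1
    rw [corner_right e hab, corner_right e hab, key] at h2
    exact Prod.ext h1 h2
  · rintro rfl j
    rcases eq_or_ne j a with rfl | ha
    · rw [corner_left, corner_left, key]
    rcases eq_or_ne j b with rfl | hb
    · rw [corner_right e hab, corner_right e hab, key]
    · simp [corner_other e ha hb]

/-! ### Subsets of the square -/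

set_option synthInstance.maxSize 2000 in
set_option synthInstance.maxHeartbeats 400000 in
/-- A nonempty subset of the square `Bool × Bool` is exactly one of: a point, a side, a diagonal,
the complement of a point, the whole square. The implications spell out a case distinction on `k`
in a form that is decidable by instance search. -/
theorem square_classification : ∀ S : Finset (Bool × Bool), S.Nonempty →
    ∃! k : Fin 5,
      (k = 0 → ∃ p, S = {p}) ∧
      (k = 1 → ∃ s, S = {(s, true), (s, false)} ∨ S = {(true, s), (false, s)}) ∧
      (k = 2 → ∃ p : Bool × Bool, S = {p, (!p.1, !p.2)}) ∧
      (k = 3 → ∃ p, S = Finset.univ \ {p}) ∧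
      (k = 4 → S = Finset.univ) := by
  unfold ExistsUnique
  beta_reduce
  decide +kernel

/-- Classification of nonempty sets of voxels bounded by an `(n-2)`-cell `e`:
exactly one of five cases occurs: a singleton; an `(n-1)`-block centered on an
`(n-1)`-cell bounded by `e`; an `(n-2)`-gap configuration with hub `e`; an
`L`-block centered on `e`; or the whole `(n-2)`-block `B_{n-2}(e)`. -/
theorem voxel_set_classification (n : ℕ) (hn : 2 ≤ n) (e : Fin n → ℤ)
    (he : cdim e = n - 2) (V : Set (Fin n → ℤ)) (hV : V ⊆ Block e)
    (hne : V.Nonempty) :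
    ∃! k : Fin 5,
      ![∃ v : Fin n → ℤ, V = {v},
        ∃ f : Fin n → ℤ, cdim f = n - 1 ∧ Bounds e f ∧ V = Block f,
        ∃ v1 v2 : Fin n → ℤ, v1 ≠ v2 ∧ V = {v1, v2} ∧ InterCell v1 v2 e,
        ∃ v ∈ Block e, V = Block e \ {v},
        V = Block e] k := by
  classical
  obtain ⟨a, b, h⟩ := exists_evenPair hn he
  set w := corner e a b with hw
  have winj : Function.Injective w := corner_injective e h.ne
  have hblock : Block e = w '' ((Finset.univ : Finset (Bool × Bool)) : Set (Bool × Bool)) := by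
    ext v
    rw [mem_block_iff_corner hn he h]
    simp [hw, eq_comm]
  obtain ⟨S, rfl⟩ : ∃ S : Finset (Bool × Bool), V = w '' (S : Set (Bool × Bool)) := by
    refine ⟨Finset.univ.filter fun p => w p ∈ V, ?_⟩
    ext v
    constructor
    · intro hv
      have hv' := hV hv
      rw [hblock] at hv'
      obtain ⟨p, -, rfl⟩ := hv'
      exact ⟨p, by simpa using hv, rfl⟩
    · rintro ⟨p, hp, rfl⟩
      simpa using hp
  have hS : S.Nonempty := by simpa using hne
  have himg : ∀ T : Finset (Bool × Bool),
      w '' (S : Set (Bool × Bool)) = w '' (T : Set (Bool × Bool)) ↔ S = T := fun T => by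
    rw [winj.image_injective.eq_iff, Finset.coe_inj]
  have hpair : ∀ p q, w '' (S : Set (Bool × Bool)) = {w p, w q} ↔ S = {p, q} := fun p q => by
    rw [← himg, Finset.coe_pair, Set.image_pair]
  have h0 : (∃ v, w '' (S : Set (Bool × Bool)) = {v}) ↔ ∃ p, S = {p} := by
    constructor
    · rintro ⟨v, hv⟩
      obtain ⟨p, -, rfl⟩ : v ∈ w '' (S : Set (Bool × Bool)) := by rw [hv]; rfl
      exact ⟨p, by rw [← himg, hv]; simp⟩
    · rintro ⟨p, rfl⟩
      exact ⟨w p, by simp⟩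
  have h1 := exists_face_iff hn he h (w '' (S : Set (Bool × Bool)))
  simp only [← hw, hpair] at h1
  have h2 : (∃ v1 v2, v1 ≠ v2 ∧ w '' (S : Set (Bool × Bool)) = {v1, v2} ∧ InterCell v1 v2 e) ↔
      ∃ p : Bool × Bool, S = {p, (!p.1, !p.2)} := by
    constructor
    · rintro ⟨v1, v2, -, hv, hi⟩
      obtain ⟨p, -, rfl⟩ : v1 ∈ w '' (S : Set (Bool × Bool)) := by rw [hv]; simp
      obtain ⟨q, -, rfl⟩ : v2 ∈ w '' (S : Set (Bool × Bool)) := by rw [hv]; simp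
      obtain rfl := (interCell_corner_iff h.ne p q).1 hi
      exact ⟨p, (hpair _ _).1 hv⟩
    · rintro ⟨p, hp⟩
      refine ⟨w p, w (!p.1, !p.2), fun hpq => ?_, (hpair _ _).2 hp,
        (interCell_corner_iff h.ne p _).2 rfl⟩
      have := congrArg Prod.fst (winj hpq)
      simp at this
  have hdiff : ∀ p, Block e \ {w p} =
      w '' ((Finset.univ \ {p} : Finset (Bool × Bool)) : Set (Bool × Bool)) := fun p => by
    rw [hblock, Finset.coe_sdiff, Set.image_sdiff winj]
    simp
  have h3 : (∃ v ∈ Block e, w '' (S : Set (Bool × Bool)) = Block e \ {v}) ↔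
      ∃ p, S = Finset.univ \ {p} := by
    constructor
    · rintro ⟨v, hv, hS⟩
      obtain ⟨p, rfl⟩ := (mem_block_iff_corner hn he h).1 hv
      exact ⟨p, by rw [← himg, hS, ← hdiff]⟩
    · rintro ⟨p, hp⟩
      exact ⟨w p, (mem_block_iff_corner hn he h).2 ⟨p, rfl⟩, by rw [hdiff, himg, hp]⟩
  have h4 : w '' (S : Set (Bool × Bool)) = Block e ↔ S = Finset.univ := by
    rw [hblock, himg]
  rw [h0, h1, h2, h3, h4]
  refine (existsUnique_congr fun k => ?_).1 (square_classification S hS)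
  fin_cases k <;> simp

end DigitalGeometry
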